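/- Let f : ℝ → ℂ be a bounded continuous almost periodic function. Then there exists a unique complex number μ(f) such that for every η > 0 there is L > 0 with the property that for all real numbers a < b with b − a ≥ L, |μ(f) − (1/(b − a)) ∫_a^b f(x) dx| < η. Moreover |μ(f)| ≤ sup_{x∈ℝ} |f(x)|, and if f is real-valued and nonnegative then μ(f) ≥ 0. -/

import Mathlib

open MeasureTheory intervalIntegral

/-- A function `f : ℝ → ℂ` is almost periodic if for every `ε > 0` there are finitely
many `y₁, …, yₙ ∈ ℝ` such that every translate of `f` is uniformly within `ε` of one of
the translates by the `yⱼ`. -/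
def AlmostPeriodic (f : ℝ → ℂ) : Prop :=
  ∀ ε : ℝ, 0 < ε → ∃ Y : Finset ℝ, Y.Nonempty ∧
    ∀ y : ℝ, ∃ yj ∈ Y, ∀ x : ℝ, ‖f (x - y) - f (x - yj)‖ < ε

/-!
Write `M_T f (a)` for the mean of `f` over `[a, a + T]`. If two translates of `f` are uniformly
`ε`-close, so are their means; since finitely many translates suffice up to `ε`, and since for fixed
`a` the means `M_T f (a)` and `M_T f (0)` differ by `O(1 / T)`, the function `M_T f` is within `2ε`
of the constant `M_T f (0)` once `T` is large. Hence `M_S (M_T f) (0)` is close to `M_T f (0)`, and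
by Fubini, `M_S M_T = M_T M_S`, it is also close to `M_S f (0)`. So `T ↦ M_T f (0)` is Cauchy, and
its limit is the invariant mean.
-/

open Filter Topology Set Bornology

section Average

variable {E : Type*} [NormedAddCommGroup E] [NormedSpace ℝ E]

lemma intervalAverage_comm_of_continuous {g : ℝ → ℝ → E} (hg : Continuous (Function.uncurry g))
    (a b c d : ℝ) :
    ⨍ s in a..b, ⨍ t in c..d, g s t = ⨍ t in c..d, ⨍ s in a..b, g s t := by
  have hint : Integrable (Function.uncurry g)
      ((volume.restrict (uIoc a b)).prod (volume.restrict (uIoc c d))) := by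
    rw [Measure.prod_restrict]
    exact (hg.continuousOn.integrableOn_compact (isCompact_uIcc.prod isCompact_uIcc)).mono_set
      (prod_mono uIoc_subset_uIcc uIoc_subset_uIcc)
  simp only [average_eq, MeasureTheory.integral_smul]
  rw [integral_integral_swap hint, smul_comm]

lemma intervalAverage_mem [CompleteSpace E] {f : ℝ → E} {s : Set E} {a b : ℝ}
    (hs : Convex ℝ s) (hsc : IsClosed s) (hab : a ≠ b) (hf : IntervalIntegrable f volume a b)
    (hfs : ∀ x ∈ uIoc a b, f x ∈ s) : ⨍ x in a..b, f x ∈ s :=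
  hs.set_average_mem hsc (by simp [sub_eq_zero, hab.symm]) (by simp)
    (ae_restrict_of_forall_mem measurableSet_uIoc hfs) (intervalIntegrable_iff.1 hf)

end Average

/-- The mean of `f` over the window `[a, a + T]`, as a function of its left endpoint `a`. -/
noncomputable def slidingMean {E : Type*} [NormedAddCommGroup E] [NormedSpace ℝ E]
    (f : ℝ → E) (T a : ℝ) : E :=
  ⨍ x in (0 : ℝ)..T, f (a + x)

/-- `m` is the invariant mean of `f`: the means of `f` over the windows `[a, a + T]` tend to `m` as
`T → ∞`, uniformly in `a`. -/
def HasUniformMean {E : Type*} [NormedAddCommGroup E] [NormedSpace ℝ E]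
    (f : ℝ → E) (m : E) : Prop :=
  TendstoUniformly (slidingMean f) (fun _ ↦ m) atTop

/-- Almost periodicity for functions with values in a metric space: the translates of `f` are
totally bounded for the uniform distance. For `ℂ`-valued functions this is `AlmostPeriodic`. -/
def HasTotallyBoundedTranslates {X : Type*} [PseudoMetricSpace X] (f : ℝ → X) : Prop :=
  ∀ ε > 0, ∃ Y : Finset ℝ, ∀ y, ∃ z ∈ Y, ∀ x, dist (f (x - y)) (f (x - z)) < ε

lemma AlmostPeriodic.hasTotallyBoundedTranslates {f : ℝ → ℂ} (hf : AlmostPeriodic f) :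
    HasTotallyBoundedTranslates f := by
  intro ε hε
  obtain ⟨Y, -, hY⟩ := hf ε hε
  exact ⟨Y, by simpa only [dist_eq_norm] using hY⟩

lemma HasTotallyBoundedTranslates.isBounded_range {X : Type*} [PseudoMetricSpace X] {f : ℝ → X}
    (hf : HasTotallyBoundedTranslates f) : IsBounded (range f) := by
  obtain ⟨Y, hY⟩ := hf 1 one_pos
  have hcover : IsBounded (⋃ z ∈ Y, Metric.ball (f (-z)) 1) :=
    (isBounded_biUnion_finset Y).2 fun _ _ ↦ Metric.isBounded_ball
  refine hcover.subset (range_subset_iff.2 fun x ↦ ?_)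
  obtain ⟨z, hz, hxz⟩ := hY (-x)
  exact mem_biUnion hz (by simpa using hxz 0)

section SlidingMean

variable {E : Type*} [NormedAddCommGroup E] [NormedSpace ℝ E] {f : ℝ → E}

lemma slidingMean_eq_smul_integral (f : ℝ → E) (T a : ℝ) :
    slidingMean f T a = T⁻¹ • ∫ x in a..a + T, f x := by
  rw [slidingMean, interval_average_eq, integral_comp_add_left, sub_zero, add_zero]

lemma slidingMean_slidingMean_comm (hf : Continuous f) (S T a : ℝ) :
    slidingMean (slidingMean f T) S a = slidingMean (slidingMean f S) T a := by
  simp only [slidingMean]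
  rw [intervalAverage_comm_of_continuous (by fun_prop)]
  simp only [add_right_comm]

lemma continuous_slidingMean (hf : Continuous f) (T : ℝ) : Continuous (slidingMean f T) := by
  unfold slidingMean
  simp only [interval_average_eq]
  exact (continuous_parametric_intervalIntegral_of_continuous' (by fun_prop) 0 T).const_smul _

lemma slidingMean_mem_of_forall_mem [CompleteSpace E] {s : Set E} (hs : Convex ℝ s)
    (hsc : IsClosed s) (hf : Continuous f) (hfs : ∀ x, f x ∈ s) {T : ℝ} (hT : T ≠ 0) (a : ℝ) :
    slidingMean f T a ∈ s :=
  have hfa : Continuous fun x ↦ f (a + x) := by fun_prop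
  intervalAverage_mem hs hsc hT.symm (hfa.intervalIntegrable 0 T) fun _ _ ↦ hfs _

lemma dist_slidingMean_le_of_forall_dist_le (hf : Continuous f) {a b ε T : ℝ} (hT : 0 < T)
    (h : ∀ x, dist (f (a + x)) (f (b + x)) ≤ ε) :
    dist (slidingMean f T a) (slidingMean f T b) ≤ ε := by
  have hint (c : ℝ) : IntervalIntegrable (fun x ↦ f (c + x)) volume 0 T :=
    Continuous.intervalIntegrable (by fun_prop) 0 T
  have hnorm : ‖∫ x in (0 : ℝ)..T, (f (a + x) - f (b + x))‖ ≤ ε * |T - 0| :=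
    norm_integral_le_of_norm_le_const fun x _ ↦ by simpa only [dist_eq_norm] using h x
  rw [sub_zero, abs_of_pos hT] at hnorm
  rw [dist_eq_norm, slidingMean, slidingMean, interval_average_eq, interval_average_eq,
    ← smul_sub, ← intervalIntegral.integral_sub (hint a) (hint b), sub_zero, norm_smul, norm_inv,
    Real.norm_of_nonneg hT.le, inv_mul_le_iff₀ hT, mul_comm]
  exact hnorm

lemma tendsto_dist_slidingMean_of_isBounded_range (hf : Continuous f)
    (hfb : IsBounded (range f)) (a b : ℝ) :
    Tendsto (fun T ↦ dist (slidingMean f T a) (slidingMean f T b)) atTop (𝓝 0) := by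
  obtain ⟨A, hA⟩ := hfb.exists_norm_le
  have hint (c d : ℝ) : IntervalIntegrable f volume c d := hf.intervalIntegrable c d
  have hnorm (c d : ℝ) : ‖∫ x in c..d, f x‖ ≤ A * |d - c| :=
    norm_integral_le_of_norm_le_const fun x _ ↦ hA _ (mem_range_self x)
  have hbound (T : ℝ) (hT : 0 < T) :
      dist (slidingMean f T a) (slidingMean f T b) ≤ T⁻¹ * (A * |b - a| + A * |b - a|) := by
    rw [dist_eq_norm, slidingMean_eq_smul_integral, slidingMean_eq_smul_integral, ← smul_sub,
      integral_interval_sub_interval_comm (hint _ _) (hint _ _) (hint _ _), norm_smul, norm_inv,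
      Real.norm_of_nonneg hT.le]
    gcongr
    calc ‖(∫ x in a..b, f x) - ∫ x in a + T..b + T, f x‖
        ≤ ‖∫ x in a..b, f x‖ + ‖∫ x in a + T..b + T, f x‖ := norm_sub_le _ _
      _ ≤ A * |b - a| + A * |b - a| :=
        add_le_add (hnorm a b) (by simpa using hnorm (a + T) (b + T))
  refine squeeze_zero' (.of_forall fun _ ↦ dist_nonneg) ((eventually_gt_atTop 0).mono hbound) ?_
  simpa using tendsto_inv_atTop_zero.mul_const (A * |b - a| + A * |b - a|)

lemma HasTotallyBoundedTranslates.eventually_dist_slidingMean_le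
    (hf : HasTotallyBoundedTranslates f) (hfc : Continuous f) {ε : ℝ} (hε : 0 < ε) :
    ∀ᶠ T in atTop, ∀ a, dist (slidingMean f T a) (slidingMean f T 0) ≤ ε := by
  obtain ⟨Y, hY⟩ := hf (ε / 2) (half_pos hε)
  have hfin : ∀ᶠ T in atTop, ∀ z ∈ Y,
      dist (slidingMean f T (-z)) (slidingMean f T 0) < ε / 2 :=
    (eventually_all_finset Y).2 fun z _ ↦
      (tendsto_dist_slidingMean_of_isBounded_range hfc hf.isBounded_range _ _).eventually_lt_const
        (half_pos hε)
  filter_upwards [hfin, eventually_gt_atTop 0] with T hTY hT a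
  obtain ⟨z, hz, haz⟩ := hY (-a)
  have htranslate : dist (slidingMean f T a) (slidingMean f T (-z)) ≤ ε / 2 :=
    dist_slidingMean_le_of_forall_dist_le hfc hT fun x ↦ by
      simpa only [sub_eq_add_neg, neg_neg, add_comm x] using (haz x).le
  linarith [dist_triangle (slidingMean f T a) (slidingMean f T (-z)) (slidingMean f T 0),
    hTY z hz]

lemma dist_slidingMean_slidingMean_le [CompleteSpace E] (hf : Continuous f) {ε S T : ℝ}
    (hS : S ≠ 0) (hT : ∀ a, dist (slidingMean f T a) (slidingMean f T 0) ≤ ε) :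
    dist (slidingMean (slidingMean f T) S 0) (slidingMean f T 0) ≤ ε :=
  slidingMean_mem_of_forall_mem (convex_closedBall _ ε) Metric.isClosed_closedBall
    (continuous_slidingMean hf T) hT hS 0

lemma cauchySeq_slidingMean_of_eventually_dist_le [CompleteSpace E] (hf : Continuous f)
    (h : ∀ ε > 0, ∀ᶠ T in atTop, ∀ a, dist (slidingMean f T a) (slidingMean f T 0) ≤ ε) :
    CauchySeq fun T ↦ slidingMean f T 0 := by
  refine Metric.cauchySeq_iff.2 fun ε hε ↦ ?_
  obtain ⟨L, hL⟩ := eventually_atTop.1 ((h (ε / 3) (by positivity)).and (eventually_ne_atTop 0))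
  refine ⟨L, fun S hS T hT ↦ ?_⟩
  have hST := dist_slidingMean_slidingMean_le hf (hL S hS).2 (hL T hT).1
  have hTS := dist_slidingMean_slidingMean_le hf (hL T hT).2 (hL S hS).1
  rw [slidingMean_slidingMean_comm hf] at hTS
  linarith [dist_triangle_left (slidingMean f S 0) (slidingMean f T 0)
    (slidingMean (slidingMean f T) S 0)]

lemma exists_hasUniformMean_of_eventually_dist_le [CompleteSpace E] (hf : Continuous f)
    (h : ∀ ε > 0, ∀ᶠ T in atTop, ∀ a, dist (slidingMean f T a) (slidingMean f T 0) ≤ ε) :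
    ∃ m, HasUniformMean f m := by
  obtain ⟨m, hm⟩ := cauchySeq_tendsto_of_complete (cauchySeq_slidingMean_of_eventually_dist_le hf h)
  refine ⟨m, Metric.tendstoUniformly_iff.2 fun ε hε ↦ ?_⟩
  filter_upwards [h (ε / 2) (half_pos hε), Metric.tendsto_nhds.1 hm (ε / 2) (half_pos hε)]
    with T hT hTm a
  linarith [dist_triangle_left m (slidingMean f T a) (slidingMean f T 0),
    dist_comm (slidingMean f T a) (slidingMean f T 0), hT a]

namespace HasUniformMean

variable {m m' : E}

lemma unique (h : HasUniformMean f m) (h' : HasUniformMean f m') : m = m' :=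
  tendsto_nhds_unique (h.tendsto_at 0) (h'.tendsto_at 0)

lemma mem_of_forall_mem [CompleteSpace E] (h : HasUniformMean f m) (hf : Continuous f) {s : Set E}
    (hs : Convex ℝ s) (hsc : IsClosed s) (hfs : ∀ x, f x ∈ s) : m ∈ s :=
  hsc.mem_of_tendsto (h.tendsto_at 0) <|
    (eventually_ne_atTop 0).mono fun _ hT ↦ slidingMean_mem_of_forall_mem hs hsc hf hfs hT 0

end HasUniformMean

lemma hasUniformMean_iff {m : E} :
    HasUniformMean f m ↔ ∀ η : ℝ, 0 < η → ∃ L : ℝ, 0 < L ∧ ∀ a b : ℝ, a < b → L ≤ b - a →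
      ‖m - (1 / (b - a)) • ∫ x in a..b, f x‖ < η := by
  simp only [HasUniformMean, Metric.tendstoUniformly_iff, slidingMean_eq_smul_integral,
    dist_eq_norm, one_div]
  refine forall₂_congr fun η _ ↦ ⟨fun h ↦ ?_, fun ⟨L, hL, h⟩ ↦ ?_⟩
  · obtain ⟨L, hL⟩ := eventually_atTop.1 h
    refine ⟨max L 1, by positivity, fun a b _ hab ↦ ?_⟩
    simpa only [add_sub_cancel] using hL (b - a) (le_of_max_le_left hab) a
  · filter_upwards [eventually_ge_atTop L] with T hT a
    simpa only [add_sub_cancel_left] using h a (a + T) (by linarith) (by linarith)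

end SlidingMean

theorem invariant_mean_exists_unique_general {E : Type*} [NormedAddCommGroup E] [NormedSpace ℝ E]
    [CompleteSpace E] {f : ℝ → E} (hfc : Continuous f) (hf : HasTotallyBoundedTranslates f) :
    ∃ m, HasUniformMean f m ∧ (∀ m', HasUniformMean f m' → m' = m) ∧
      ∀ s : Set E, Convex ℝ s → IsClosed s → (∀ x, f x ∈ s) → m ∈ s := by
  obtain ⟨m, hm⟩ := exists_hasUniformMean_of_eventually_dist_le hfc fun _ ↦
    hf.eventually_dist_slidingMean_le hfc
  exact ⟨m, hm, fun _ hm' ↦ hm'.unique hm, fun _ hs hsc ↦ hm.mem_of_forall_mem hfc hs hsc⟩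

lemma convex_setOf_im_eq_zero_and_re_nonneg : Convex ℝ {z : ℂ | z.im = 0 ∧ 0 ≤ z.re} :=
  (convex_hyperplane Complex.imLm.isLinear 0).inter (convex_halfSpace_re_ge 0)

lemma isClosed_setOf_im_eq_zero_and_re_nonneg : IsClosed {z : ℂ | z.im = 0 ∧ 0 ≤ z.re} :=
  (isClosed_eq Complex.continuous_im continuous_const).inter
    (isClosed_le continuous_const Complex.continuous_re)

theorem invariant_mean_exists_unique (f : ℝ → ℂ)
    (hfc : Continuous f) (hfb : ∃ A : ℝ, ∀ x : ℝ, ‖f x‖ ≤ A)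
    (hfap : AlmostPeriodic f) :
    ∃ μf : ℂ,
      (∀ η : ℝ, 0 < η → ∃ L : ℝ, 0 < L ∧ ∀ a b : ℝ, a < b → L ≤ b - a →
        ‖μf - (1 / (b - a) : ℝ) * ∫ x in a..b, f x‖ < η) ∧
      (∀ μ' : ℂ,
        (∀ η : ℝ, 0 < η → ∃ L : ℝ, 0 < L ∧ ∀ a b : ℝ, a < b → L ≤ b - a →
          ‖μ' - (1 / (b - a) : ℝ) * ∫ x in a..b, f x‖ < η) → μ' = μf) ∧
      ‖μf‖ ≤ ⨆ x : ℝ, ‖f x‖ ∧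
      ((∀ x : ℝ, (f x).im = 0 ∧ 0 ≤ (f x).re) → μf.im = 0 ∧ 0 ≤ μf.re) := by
  simp only [← Complex.real_smul, ← hasUniformMean_iff]
  obtain ⟨m, hm, huniq, hmem⟩ :=
    invariant_mean_exists_unique_general hfc hfap.hasTotallyBoundedTranslates
  obtain ⟨A, hA⟩ := hfb
  have hbdd : BddAbove (range fun x ↦ ‖f x‖) := ⟨A, forall_mem_range.2 hA⟩
  refine ⟨m, hm, huniq, ?_, hmem _ convex_setOf_im_eq_zero_and_re_nonneg
    isClosed_setOf_im_eq_zero_and_re_nonneg⟩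
  simpa using hmem _ (convex_closedBall 0 (⨆ x, ‖f x‖)) Metric.isClosed_closedBall
    fun x ↦ by simpa using le_ciSup hbdd x
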